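/- arXiv:1707.03287 — 4 statements merged into one kernel-verified Lean document; each statement's English description precedes it below -/
import Mathlib

section
/- Let I ⊆ ℝ be an open interval, let q : ℝ → ℝ be continuous on I, and let α : ℝ → ℝ be three times continuously differentiable on I with α'(t) ≠ 0 for all t ∈ I. Define u(t) = cos(α(t))/√|α'(t)| and v(t) = sin(α(t))/√|α'(t)|. Then u and v both satisfy the differential equation y''(t) + q(t)·y(t) = 0 for all t ∈ I if and only if α' satisfies Kummer's equation q(t) − (α'(t))² − (1/2)·α'''(t)/α'(t) + (3/4)·(α''(t)/α'(t))² = 0 for all t ∈ I. -/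
open Filter Topology

/-- The amplitude `|p|^(-1/2)` has logarithmic derivative `-p'/(2p)`. -/
theorem HasDerivAt.inv_sqrt_abs {p : ℝ → ℝ} {p' t : ℝ} (hp : HasDerivAt p p' t)
    (h0 : p t ≠ 0) :
    HasDerivAt (fun s => (√|p s|)⁻¹) (-(1 / 2) * (p' / p t) * (√|p t|)⁻¹) t := by
  have hpos : 0 < |p t| := abs_pos.mpr h0
  have hsqrt : √|p t| ≠ 0 := (Real.sqrt_pos.mpr hpos).ne'
  have habs : HasDerivAt (fun s => |p s|) ((SignType.sign (p t) : ℝ) * p') t :=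
    (hasDerivAt_abs h0).comp t hp
  refine ((habs.sqrt hpos.ne').inv hsqrt).congr_deriv ?_
  rw [Real.sq_sqrt hpos.le]
  rcases lt_or_gt_of_ne h0 with h | h
  · rw [sign_neg h, abs_of_neg h] at *
    simp only [SignType.coe_neg_one]
    field_simp
  · rw [sign_pos h, abs_of_pos h] at *
    simp only [SignType.coe_one]
    field_simp

/-- If `f'' = -f`, then `y = f(α)/√|α'|` satisfies `y'' + Q y = 0`, where `Q` is the coefficient
that Kummer's equation attaches to the phase `α`. -/
theorem deriv_deriv_phase {f g α y : ℝ → ℝ} {s : Set ℝ} (hs : IsOpen s)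
    (hf : ∀ x, HasDerivAt f (g x) x) (hg : ∀ x, HasDerivAt g (-f x) x)
    (hα : ContDiffOn ℝ 3 α s) (hα' : ∀ t ∈ s, deriv α t ≠ 0)
    (hy : ∀ t, y t = f (α t) / √|deriv α t|) {t : ℝ} (ht : t ∈ s) :
    deriv (deriv y) t =
      -((deriv α t) ^ 2 + (1 / 2) * (deriv (deriv (deriv α)) t / deriv α t)
        - (3 / 4) * (deriv (deriv α) t / deriv α t) ^ 2) * y t := by
  have hα₁ : ContDiffOn ℝ 2 (deriv α) s := hα.deriv_of_isOpen hs (by norm_num)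
  have hα₂ : ContDiffOn ℝ 1 (deriv (deriv α)) s := hα₁.deriv_of_isOpen hs (by norm_num)
  have d₀ : ∀ x ∈ s, HasDerivAt α (deriv α x) x := fun x hx =>
    ((hα.differentiableOn (by norm_num)).differentiableAt (hs.mem_nhds hx)).hasDerivAt
  have d₁ : ∀ x ∈ s, HasDerivAt (deriv α) (deriv (deriv α) x) x := fun x hx =>
    ((hα₁.differentiableOn (by norm_num)).differentiableAt (hs.mem_nhds hx)).hasDerivAt
  have d₂ : HasDerivAt (deriv (deriv α)) (deriv (deriv (deriv α)) t) t :=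
    ((hα₂.differentiableOn (by norm_num)).differentiableAt (hs.mem_nhds ht)).hasDerivAt
  have hy_eq : y = fun x => f (α x) * (√|deriv α x|)⁻¹ := by
    funext x
    rw [hy, div_eq_mul_inv]
  have hy' : deriv y =ᶠ[𝓝 t] fun x => (√|deriv α x|)⁻¹ *
      (g (α x) * deriv α x - (1 / 2) * (deriv (deriv α) x / deriv α x) * f (α x)) := by
    filter_upwards [hs.mem_nhds ht] with x hx
    rw [hy_eq]
    refine ((((hf (α x)).comp x (d₀ x hx)).mul
      ((d₁ x hx).inv_sqrt_abs (hα' x hx))).deriv).trans ?_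
    simp only [Function.comp_apply]
    ring
  have hfα : HasDerivAt (fun x => f (α x)) (g (α t) * deriv α t) t :=
    (hf (α t)).comp t (d₀ t ht)
  have hgα : HasDerivAt (fun x => g (α x)) (-f (α t) * deriv α t) t :=
    (hg (α t)).comp t (d₀ t ht)
  have hy'' := ((d₁ t ht).inv_sqrt_abs (hα' t ht)).mul
    ((hgα.mul (d₁ t ht)).sub (((d₂.div (d₁ t ht) (hα' t ht)).const_mul (1 / 2)).mul hfα))
  rw [hy'.deriv_eq]
  refine hy''.deriv.trans ?_
  rw [hy_eq]
  have h0 := hα' t ht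
  simp only [Pi.mul_apply, Pi.sub_apply, Pi.div_apply]
  generalize (√|deriv α t|)⁻¹ = w
  field_simp
  ring

/-- Kummer's equation characterizes phase functions: with
`u(t) = cos(α(t))/√|α'(t)|` and `v(t) = sin(α(t))/√|α'(t)|`, both `u` and `v`
solve `y'' + q·y = 0` on the open interval `(a,b)` iff `α'` satisfies
Kummer's equation there. -/
theorem kummer_iff_phase (a b : ℝ) (q α u v : ℝ → ℝ)
    (hq : ContinuousOn q (Set.Ioo a b))
    (hα : ContDiffOn ℝ 3 α (Set.Ioo a b))
    (hα' : ∀ t ∈ Set.Ioo a b, deriv α t ≠ 0)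
    (hu : ∀ t, u t = Real.cos (α t) / Real.sqrt |deriv α t|)
    (hv : ∀ t, v t = Real.sin (α t) / Real.sqrt |deriv α t|) :
    ((∀ t ∈ Set.Ioo a b, deriv (deriv u) t + q t * u t = 0) ∧
      (∀ t ∈ Set.Ioo a b, deriv (deriv v) t + q t * v t = 0)) ↔
    (∀ t ∈ Set.Ioo a b,
      q t - (deriv α t) ^ 2
        - (1 / 2) * (deriv (deriv (deriv α)) t / deriv α t)
        + (3 / 4) * (deriv (deriv α) t / deriv α t) ^ 2 = 0) := by
  have Hu := fun t (ht : t ∈ Set.Ioo a b) => deriv_deriv_phase isOpen_Ioo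
    (g := fun x => -Real.sin x) Real.hasDerivAt_cos (fun x => (Real.hasDerivAt_sin x).neg)
    hα hα' hu ht
  have Hv := fun t (ht : t ∈ Set.Ioo a b) => deriv_deriv_phase isOpen_Ioo
    Real.hasDerivAt_sin Real.hasDerivAt_cos hα hα' hv ht
  constructor
  · rintro ⟨h₁, h₂⟩ t ht
    have e₁ := h₁ t ht
    have e₂ := h₂ t ht
    rw [Hu t ht] at e₁
    rw [Hv t ht] at e₂
    have hw : √|deriv α t| ≠ 0 := (Real.sqrt_pos.mpr (abs_pos.mpr (hα' t ht))).ne'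
    have hcos : u t * √|deriv α t| = Real.cos (α t) := by rw [hu, div_mul_cancel₀ _ hw]
    have hsin : v t * √|deriv α t| = Real.sin (α t) := by rw [hv, div_mul_cancel₀ _ hw]
    linear_combination (√|deriv α t| * Real.cos (α t)) * e₁ +
      (√|deriv α t| * Real.sin (α t)) * e₂ -
      (q t - (deriv α t) ^ 2 - (1 / 2) * (deriv (deriv (deriv α)) t / deriv α t)
        + (3 / 4) * (deriv (deriv α) t / deriv α t) ^ 2) *
        (Real.cos (α t) * hcos + Real.sin (α t) * hsin + Real.sin_sq_add_cos_sq (α t))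
  · intro h
    refine ⟨fun t ht => ?_, fun t ht => ?_⟩
    · rw [Hu t ht]
      linear_combination u t * h t ht
    · rw [Hv t ht]
      linear_combination v t * h t ht
end

section
/- Let I ⊆ ℝ be an open interval, let q : ℝ → ℝ be continuous on I, and let u, v : ℝ → ℝ be twice continuously differentiable solutions of y''(t) + q(t)·y(t) = 0 on I whose Wronskian u(t)·v'(t) − v(t)·u'(t) is equal to a constant W > 0 for all t ∈ I. Then there exists a continuously differentiable function α : ℝ → ℝ such that for all t ∈ I: α'(t) = W/((u(t))² + (v(t))²) > 0, u(t) = √W · cos(α(t))/√(α'(t)), and v(t) = √W · sin(α(t))/√(α'(t)). -/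
open Set

/-- A continuous function on an open interval has an antiderivative there, with any prescribed value
at a given point. -/
lemma exists_hasDerivAt_of_continuousOn_Ioo {a b c : ℝ} (hc : c ∈ Ioo a b) {f : ℝ → ℝ}
    (hf : ContinuousOn f (Ioo a b)) (θ : ℝ) :
    ∃ α : ℝ → ℝ, α c = θ ∧ ∀ t ∈ Ioo a b, HasDerivAt α (f t) t := by
  refine ⟨fun t => θ + ∫ s in c..t, f s, by simp, fun t ht => ?_⟩
  refine (intervalIntegral.integral_hasDerivAt_right ?_ ?_ ?_).const_add θ
  · exact (hf.mono (ordConnected_Ioo.uIcc_subset hc ht)).intervalIntegrable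
  · exact hf.stronglyMeasurableAtFilter isOpen_Ioo t ht
  · exact hf.continuousAt (isOpen_Ioo.mem_nhds ht)

/-- If `α` has the derivative of the polar angle of the curve `(u, v)`, then the angle between
`(u, v)` and `(cos α, sin α)` has a cosine with zero derivative. -/
lemma hasDerivAt_cos_angle_zero {u v α : ℝ → ℝ} {u' v' t : ℝ} (hu : HasDerivAt u u' t)
    (hv : HasDerivAt v v' t) (hpos : 0 < u t ^ 2 + v t ^ 2)
    (hα : HasDerivAt α ((u t * v' - v t * u') / (u t ^ 2 + v t ^ 2)) t) :
    HasDerivAt (fun s => (u s * Real.cos (α s) + v s * Real.sin (α s)) / √(u s ^ 2 + v s ^ 2))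
      0 t := by
  have hr := Real.sqrt_pos.2 hpos
  have hsq := Real.sq_sqrt hpos.le
  have h := ((hu.mul hα.cos).add (hv.mul hα.sin)).div
    (((hu.pow 2).add (hv.pow 2)).sqrt hpos.ne') hr.ne'
  refine h.congr_deriv ?_
  simp only [Pi.add_apply, Pi.mul_apply, Pi.pow_apply]
  rw [div_eq_zero_iff]
  left
  generalize √(u t ^ 2 + v t ^ 2) = r at hr hsq
  rw [← hsq]
  field_simp
  push_cast
  rw [hsq]
  ring

/-- The cosine of the angle in `hasDerivAt_cos_angle_zero` takes the same value at any two points of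
an open interval. -/
lemma cos_angle_eq {a b c t : ℝ} (hc : c ∈ Ioo a b) (ht : t ∈ Ioo a b) {u v u' v' α : ℝ → ℝ}
    (hu : ∀ s ∈ Ioo a b, HasDerivAt u (u' s) s) (hv : ∀ s ∈ Ioo a b, HasDerivAt v (v' s) s)
    (hpos : ∀ s ∈ Ioo a b, 0 < u s ^ 2 + v s ^ 2)
    (hα : ∀ s ∈ Ioo a b,
      HasDerivAt α ((u s * v' s - v s * u' s) / (u s ^ 2 + v s ^ 2)) s) :
    (u t * Real.cos (α t) + v t * Real.sin (α t)) / √(u t ^ 2 + v t ^ 2) =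
      (u c * Real.cos (α c) + v c * Real.sin (α c)) / √(u c ^ 2 + v c ^ 2) := by
  have h := fun s hs => hasDerivAt_cos_angle_zero (hu s hs) (hv s hs) (hpos s hs) (hα s hs)
  exact isOpen_Ioo.is_const_of_deriv_eq_zero isPreconnected_Ioo
    (fun s hs => (h s hs).differentiableAt.differentiableWithinAt) (fun s hs => (h s hs).deriv)
    ht hc

/-- A function whose derivative is that of the polar angle of the curve `(u, v)`, and which is a polar
angle at one point, is a polar angle everywhere. -/
lemma polar_of_hasDerivAt {a b c t : ℝ} (hc : c ∈ Ioo a b) (ht : t ∈ Ioo a b)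
    {u v u' v' α : ℝ → ℝ}
    (hu : ∀ s ∈ Ioo a b, HasDerivAt u (u' s) s) (hv : ∀ s ∈ Ioo a b, HasDerivAt v (v' s) s)
    (hpos : ∀ s ∈ Ioo a b, 0 < u s ^ 2 + v s ^ 2)
    (hα : ∀ s ∈ Ioo a b,
      HasDerivAt α ((u s * v' s - v s * u' s) / (u s ^ 2 + v s ^ 2)) s)
    (huc : u c = √(u c ^ 2 + v c ^ 2) * Real.cos (α c))
    (hvc : v c = √(u c ^ 2 + v c ^ 2) * Real.sin (α c)) :
    u t = √(u t ^ 2 + v t ^ 2) * Real.cos (α t) ∧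
      v t = √(u t ^ 2 + v t ^ 2) * Real.sin (α t) := by
  have hcos := cos_angle_eq hc ht hu hv hpos hα
  have hsin := cos_angle_eq hc ht hu hv hpos fun s hs => (hα s hs).add_const (Real.pi / 2)
  simp only [Real.cos_add_pi_div_two, Real.sin_add_pi_div_two] at hsin
  have hrc := Real.sqrt_pos.2 (hpos c hc)
  have hrt := Real.sqrt_pos.2 (hpos t ht)
  generalize √(u c ^ 2 + v c ^ 2) = rc at *
  generalize √(u t ^ 2 + v t ^ 2) = r at *
  have hcos' : (u c * Real.cos (α c) + v c * Real.sin (α c)) / rc = 1 := by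
    rw [div_eq_one_iff_eq hrc.ne', huc, hvc]
    linear_combination rc * Real.sin_sq_add_cos_sq (α c)
  have hsin' : (u c * -Real.sin (α c) + v c * Real.cos (α c)) / rc = 0 := by
    rw [huc, hvc]
    ring
  rw [hcos', div_eq_one_iff_eq hrt.ne'] at hcos
  rw [hsin', div_eq_zero_iff, or_iff_left hrt.ne'] at hsin
  constructor
  · linear_combination Real.cos (α t) * hcos - Real.sin (α t) * hsin
      - u t * Real.sin_sq_add_cos_sq (α t)
  · linear_combination Real.sin (α t) * hcos + Real.cos (α t) * hsin
      - v t * Real.sin_sq_add_cos_sq (α t)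

/-- Every point of the plane has a polar angle. -/
lemma exists_polar_angle (x y : ℝ) :
    ∃ θ : ℝ, x = √(x ^ 2 + y ^ 2) * Real.cos θ ∧ y = √(x ^ 2 + y ^ 2) * Real.sin θ := by
  have hnorm : ‖(⟨x, y⟩ : ℂ)‖ = √(x ^ 2 + y ^ 2) := by
    rw [Complex.norm_eq_sqrt_sq_add_sq]
  exact ⟨Complex.arg ⟨x, y⟩, by rw [← hnorm, Complex.norm_mul_cos_arg],
    by rw [← hnorm, Complex.norm_mul_sin_arg]⟩

/-- Existence of a phase function: if `u, v` are twice continuously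
differentiable solutions of `y'' + q·y = 0` on the open interval `(a,b)` with
constant Wronskian `W > 0`, then there is a continuously differentiable `α` with
`α' = W/(u² + v²) > 0`, `u = √W · cos(α)/√(α')` and `v = √W · sin(α)/√(α')`. -/
theorem exists_phase_function (a b W : ℝ) (hW : 0 < W) (q u v : ℝ → ℝ)
    (hq : ContinuousOn q (Set.Ioo a b))
    (hu : ContDiffOn ℝ 2 u (Set.Ioo a b))
    (hv : ContDiffOn ℝ 2 v (Set.Ioo a b))
    (hueq : ∀ t ∈ Set.Ioo a b, deriv (deriv u) t + q t * u t = 0)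
    (hveq : ∀ t ∈ Set.Ioo a b, deriv (deriv v) t + q t * v t = 0)
    (hwron : ∀ t ∈ Set.Ioo a b, u t * deriv v t - v t * deriv u t = W) :
    ∃ α : ℝ → ℝ, ContDiffOn ℝ 1 α (Set.Ioo a b) ∧
      ∀ t ∈ Set.Ioo a b,
        deriv α t = W / ((u t) ^ 2 + (v t) ^ 2) ∧
        0 < deriv α t ∧
        u t = Real.sqrt W * (Real.cos (α t) / Real.sqrt (deriv α t)) ∧
        v t = Real.sqrt W * (Real.sin (α t) / Real.sqrt (deriv α t)) := by
  rcases (Ioo a b).eq_empty_or_nonempty with hI | ⟨c, hc⟩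
  · exact ⟨0, by simp [hI], by simp [hI]⟩
  have hasDeriv {w : ℝ → ℝ} (hw : ContDiffOn ℝ 2 w (Ioo a b)) :
      ∀ t ∈ Ioo a b, HasDerivAt w (deriv w t) t := fun t ht =>
    ((hw.differentiableOn two_ne_zero).differentiableAt (isOpen_Ioo.mem_nhds ht)).hasDerivAt
  have hpos : ∀ t ∈ Ioo a b, 0 < u t ^ 2 + v t ^ 2 := by
    intro t ht
    have hne : u t ≠ 0 ∨ v t ≠ 0 := by
      by_contra! h
      have := hwron t ht
      simp [h.1, h.2] at this
      exact hW.ne this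
    rcases hne with h | h <;> positivity
  have hcont : ContinuousOn (fun t => W / (u t ^ 2 + v t ^ 2)) (Ioo a b) :=
    continuousOn_const.div ((hu.continuousOn.pow 2).add (hv.continuousOn.pow 2))
      fun t ht => (hpos t ht).ne'
  obtain ⟨θ, huθ, hvθ⟩ := exists_polar_angle (u c) (v c)
  obtain ⟨α, hαc, hα⟩ := exists_hasDerivAt_of_continuousOn_Ioo hc hcont θ
  rw [← hαc] at huθ hvθ
  refine ⟨α, ?_, fun t ht => ?_⟩
  · rw [show (1 : WithTop ℕ∞) = 0 + 1 by simp, contDiffOn_succ_iff_deriv_of_isOpen isOpen_Ioo]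
    refine ⟨fun t ht => (hα t ht).differentiableAt.differentiableWithinAt, by simp, ?_⟩
    exact contDiffOn_zero.2 (hcont.congr fun t ht => (hα t ht).deriv)
  · obtain ⟨hut, hvt⟩ := polar_of_hasDerivAt hc ht (hasDeriv hu) (hasDeriv hv) hpos
      (fun s hs => by rw [hwron s hs]; exact hα s hs) huθ hvθ
    have hamp (x : ℝ) : √W * (x / √(W / (u t ^ 2 + v t ^ 2))) = √(u t ^ 2 + v t ^ 2) * x := by
      have hsW := Real.sqrt_pos.2 hW
      rw [Real.sqrt_div hW.le]
      field_simp
    rw [(hα t ht).deriv, hamp, hamp]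
    exact ⟨rfl, div_pos hW (hpos t ht), hut, hvt⟩
end

section
/- Let n ≥ 1 be an integer and let f be a real polynomial in three variables whose degree in each variable is at most n. Define, for 0 ≤ i, j, k ≤ n, the coefficients b_{i,j,k} = (8/n³) · Σ''_{r=0}^{n} Σ''_{s=0}^{n} Σ''_{t=0}^{n} T_i(ρ_{r,n})·T_j(ρ_{s,n})·T_k(ρ_{t,n})·f(ρ_{r,n}, ρ_{s,n}, ρ_{t,n}), where each Σ'' halves its first and last terms and ρ_{l,n} = −cos(πl/n). Then for all real x, y, z, f(x,y,z) = Σ''_{i=0}^{n} Σ''_{j=0}^{n} Σ''_{k=0}^{n} b_{i,j,k}·T_i(x)·T_j(y)·T_k(z), where again each Σ'' halves its first and last terms. -/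
/-- The `l`-th node of the `(n+1)`-point Chebyshev grid on `[-1,1]`. -/
noncomputable def chebNode (n l : ℕ) : ℝ := -Real.cos (Real.pi * l / n)

/-- The weight halving the first and last terms of a `Σ''` sum. -/
noncomputable def chebWeight (n l : ℕ) : ℝ := if l = 0 ∨ l = n then 1 / 2 else 1

theorem chebWeight_sum_eq_trapezoid {n : ℕ} (hn : 1 ≤ n) (g : ℕ → ℝ) :
    ∑ l ∈ Finset.range (n + 1), chebWeight n l * g l =
      ∑ l ∈ Finset.range n, (g l + g (l + 1)) / 2 := by
  obtain ⟨m, rfl⟩ : ∃ m, n = m + 1 := ⟨n - 1, by omega⟩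
  have hinner : ∑ l ∈ Finset.range m, chebWeight (m + 1) (l + 1) * g (l + 1) =
      ∑ l ∈ Finset.range m, g (l + 1) := by
    refine Finset.sum_congr rfl fun l hl => ?_
    have : l ≠ m := (Finset.mem_range.mp hl).ne
    simp [chebWeight, this]
  rw [Finset.sum_range_succ, Finset.sum_range_succ', hinner, ← Finset.sum_div,
    Finset.sum_add_distrib, Finset.sum_range_succ' g, Finset.sum_range_succ (fun l => g (l + 1))]
  simp only [chebWeight, true_or, or_true, if_true]
  ring

/-- The trapezoidal sum of `cos (m θ)` over a half period vanishes when `2 n ∤ m`. -/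
theorem chebWeight_sum_cos_eq_zero {n : ℕ} (hn : 1 ≤ n) {m : ℤ} (hm : m ≠ 0)
    (hm' : |m| < 2 * n) :
    ∑ l ∈ Finset.range (n + 1), chebWeight n l * Real.cos (l * (m * Real.pi / n)) = 0 := by
  have hn0 : (0 : ℝ) < n := by exact_mod_cast hn
  set a : ℝ := m * Real.pi / n with ha
  have hsin : Real.sin (a / 2) ≠ 0 := by
    rw [Real.sin_ne_zero_iff]
    intro k hk
    have h1 : (k : ℝ) * (2 * n) = m := by
      rw [ha] at hk
      field_simp at hk
      linarith
    have h2 : k * (2 * n) = m := by exact_mod_cast h1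
    exact hm (Int.eq_zero_of_abs_lt_dvd ⟨k, by rw [← h2]; ring⟩ hm')
  rw [chebWeight_sum_eq_trapezoid hn (fun l => Real.cos (l * a))]
  refine (mul_eq_zero.mp ?_).resolve_left hsin
  have hterm : ∀ l : ℕ, Real.sin (a / 2) * ((Real.cos (l * a) + Real.cos ((l + 1 : ℕ) * a)) / 2) =
      Real.cos (a / 2) / 2 * (Real.sin ((l + 1 : ℕ) * a) - Real.sin (l * a)) := by
    intro l
    rw [Real.cos_add_cos, Real.sin_sub_sin]
    push_cast
    rw [show ((l : ℝ) * a - (l + 1) * a) / 2 = -(a / 2) by ring,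
      show (((l : ℝ) + 1) * a - l * a) / 2 = a / 2 by ring, Real.cos_neg,
      add_comm ((l : ℝ) * a)]
    ring
  rw [Finset.mul_sum, Finset.sum_congr rfl fun l _ => hterm l, ← Finset.mul_sum,
    Finset.sum_range_sub (fun l : ℕ => Real.sin (l * a))]
  have hna : (n : ℝ) * a = m * Real.pi := by
    rw [ha]
    field_simp
  simp [hna, Real.sin_int_mul_pi]

theorem chebWeight_sum_one {n : ℕ} (hn : 1 ≤ n) :
    ∑ l ∈ Finset.range (n + 1), chebWeight n l = n := by
  simpa using chebWeight_sum_eq_trapezoid hn (fun _ => 1)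

theorem eval_T_chebNode_mul_eval_T_chebNode (n i r s : ℕ) :
    (Polynomial.Chebyshev.T ℝ (i : ℤ)).eval (chebNode n r) *
        (Polynomial.Chebyshev.T ℝ (i : ℤ)).eval (chebNode n s) =
      (Real.cos (i * (((r : ℤ) + s : ℤ) * Real.pi / n)) +
        Real.cos (i * (((r : ℤ) - s : ℤ) * Real.pi / n))) / 2 := by
  have hsign : (((i : ℤ).negOnePow : ℤ) : ℝ) * (((i : ℤ).negOnePow : ℤ) : ℝ) = 1 := by
    rw [← Int.cast_mul, ← Units.val_mul, Int.units_mul_self]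
    simp
  rw [chebNode, chebNode, Polynomial.Chebyshev.T_eval_neg, Polynomial.Chebyshev.T_eval_neg,
    mul_mul_mul_comm, hsign, one_mul, Polynomial.Chebyshev.T_real_cos,
    Polynomial.Chebyshev.T_real_cos, Real.cos_add_cos]
  push_cast
  rw [mul_div_assoc, mul_assoc, mul_div_assoc]
  ring_nf

/-- Discrete orthogonality of the Chebyshev polynomials on the Chebyshev grid. -/
theorem chebNode_orthogonality {n r s : ℕ} (hn : 1 ≤ n) (hr : r ≤ n) (hs : s ≤ n) :
    2 / (n : ℝ) * chebWeight n r * ∑ i ∈ Finset.range (n + 1), chebWeight n i *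
      ((Polynomial.Chebyshev.T ℝ (i : ℤ)).eval (chebNode n r) *
        (Polynomial.Chebyshev.T ℝ (i : ℤ)).eval (chebNode n s)) = if s = r then 1 else 0 := by
  have hn0 : (n : ℝ) ≠ 0 := by exact_mod_cast (by omega : n ≠ 0)
  have hsplit : ∑ i ∈ Finset.range (n + 1), chebWeight n i *
      ((Polynomial.Chebyshev.T ℝ (i : ℤ)).eval (chebNode n r) *
        (Polynomial.Chebyshev.T ℝ (i : ℤ)).eval (chebNode n s)) =
      (∑ i ∈ Finset.range (n + 1),
          chebWeight n i * Real.cos (i * (((r : ℤ) + s : ℤ) * Real.pi / n)) +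
        ∑ i ∈ Finset.range (n + 1),
          chebWeight n i * Real.cos (i * (((r : ℤ) - s : ℤ) * Real.pi / n))) / 2 := by
    rw [← Finset.sum_add_distrib, Finset.sum_div]
    refine Finset.sum_congr rfl fun i _ => ?_
    rw [eval_T_chebNode_mul_eval_T_chebNode]
    ring
  rw [hsplit]
  split_ifs with h
  · subst h
    have hdiff : ∑ i ∈ Finset.range (n + 1),
        chebWeight n i * Real.cos (i * (((s : ℤ) - s : ℤ) * Real.pi / n)) = n := by
      simpa using chebWeight_sum_one hn
    rw [hdiff]
    by_cases hend : s = 0 ∨ s = n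
    · have hsum : ∑ i ∈ Finset.range (n + 1),
          chebWeight n i * Real.cos (i * (((s : ℤ) + s : ℤ) * Real.pi / n)) = n := by
        refine Eq.trans (Finset.sum_congr rfl fun i _ => ?_) (chebWeight_sum_one hn)
        rcases hend with rfl | rfl
        · simp
        · rw [show (i : ℝ) * (((s : ℤ) + s : ℤ) * Real.pi / s) = i * (2 * Real.pi) by
            push_cast; field_simp; ring, Real.cos_nat_mul_two_pi, mul_one]
      rw [hsum, chebWeight, if_pos hend]
      field_simp
      norm_num
    · rw [chebWeight_sum_cos_eq_zero hn (by omega) (by rw [abs_lt]; omega), chebWeight,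
        if_neg hend]
      field_simp
      norm_num
  · rw [chebWeight_sum_cos_eq_zero hn (by omega) (by rw [abs_lt]; omega),
      chebWeight_sum_cos_eq_zero hn (by omega) (by rw [abs_lt]; omega)]
    simp

theorem chebNode_injOn (n : ℕ) : Set.InjOn (chebNode n) (Finset.range (n + 1)) := by
  intro r hr s hs h
  rw [Finset.coe_range, Set.mem_Iio] at hr hs
  rcases Nat.eq_zero_or_pos n with rfl | hn
  · omega
  by_contra hne
  have hself := chebNode_orthogonality hn (Nat.lt_succ_iff.mp hr) (Nat.lt_succ_iff.mp hr)
  have hother := chebNode_orthogonality hn (Nat.lt_succ_iff.mp hr) (Nat.lt_succ_iff.mp hs)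
  rw [← h, hself, if_pos rfl, if_neg (Ne.symm hne)] at hother
  exact one_ne_zero hother

/-- The cardinal function of the `r`-th Chebyshev node, expanded in Chebyshev polynomials. -/
noncomputable def chebCardinal (n r : ℕ) : Polynomial ℝ :=
  ∑ i ∈ Finset.range (n + 1), Polynomial.C (2 / (n : ℝ) * (chebWeight n i * chebWeight n r *
    (Polynomial.Chebyshev.T ℝ (i : ℤ)).eval (chebNode n r))) * Polynomial.Chebyshev.T ℝ (i : ℤ)

theorem eval_chebCardinal (n r : ℕ) (x : ℝ) :
    (chebCardinal n r).eval x = ∑ i ∈ Finset.range (n + 1),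
      2 / (n : ℝ) * (chebWeight n i * chebWeight n r *
        (Polynomial.Chebyshev.T ℝ (i : ℤ)).eval (chebNode n r)) *
        (Polynomial.Chebyshev.T ℝ (i : ℤ)).eval x := by
  simp [chebCardinal, Polynomial.eval_finsetSum]

theorem eval_chebCardinal_chebNode {n r s : ℕ} (hn : 1 ≤ n) (hr : r ≤ n) (hs : s ≤ n) :
    (chebCardinal n r).eval (chebNode n s) = if s = r then 1 else 0 := by
  rw [← chebNode_orthogonality hn hr hs, eval_chebCardinal, Finset.mul_sum]
  exact Finset.sum_congr rfl fun i _ => by ring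

theorem degree_chebCardinal_lt (n r : ℕ) : (chebCardinal n r).degree < (n + 1 : ℕ) := by
  rw [← Polynomial.mem_degreeLT]
  refine Submodule.sum_mem _ fun i hi => ?_
  rw [← Polynomial.smul_eq_C_mul]
  refine Submodule.smul_mem _ _ (Polynomial.mem_degreeLT.mpr ?_)
  rw [Polynomial.Chebyshev.degree_T, Int.natAbs_natCast]
  exact_mod_cast Finset.mem_range.mp hi

/-- Univariate Chebyshev interpolation reproduces polynomials of degree at most `n`. -/
theorem eq_sum_chebCardinal {n : ℕ} (hn : 1 ≤ n) (g : ℝ → ℝ) (a : ℕ → ℝ)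
    (hg : ∀ x, g x = ∑ p ∈ Finset.range (n + 1), a p * x ^ p) (x : ℝ) :
    g x = ∑ r ∈ Finset.range (n + 1), (chebCardinal n r).eval x * g (chebNode n r) := by
  let P : Polynomial ℝ := ∑ p ∈ Finset.range (n + 1), Polynomial.monomial p (a p)
  let Q : Polynomial ℝ :=
    ∑ r ∈ Finset.range (n + 1), Polynomial.C (g (chebNode n r)) * chebCardinal n r
  have hP : ∀ y, P.eval y = g y := fun y => by
    simp [P, hg, Polynomial.eval_finsetSum, Polynomial.eval_monomial]
  have hQ : ∀ y, Q.eval y =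
      ∑ r ∈ Finset.range (n + 1), (chebCardinal n r).eval y * g (chebNode n r) := fun y => by
    simp [Q, Polynomial.eval_finsetSum, mul_comm]
  have hPdeg : P.degree < (n + 1 : ℕ) := by
    rw [← Polynomial.mem_degreeLT]
    refine Submodule.sum_mem _ fun p hp => Polynomial.mem_degreeLT.mpr ?_
    exact (Polynomial.degree_monomial_le p (a p)).trans_lt
      (by exact_mod_cast Finset.mem_range.mp hp)
  have hQdeg : Q.degree < (n + 1 : ℕ) := by
    rw [← Polynomial.mem_degreeLT]
    refine Submodule.sum_mem _ fun r _ => ?_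
    rw [← Polynomial.smul_eq_C_mul]
    exact Submodule.smul_mem _ _ (Polynomial.mem_degreeLT.mpr (degree_chebCardinal_lt n r))
  have hPQ : P = Q := by
    refine Polynomial.eq_of_degrees_lt_of_eval_index_eq (Finset.range (n + 1))
      (chebNode_injOn n) (by simpa using hPdeg) (by simpa using hQdeg) fun s hs => ?_
    rw [hP, hQ]
    have hcard : ∀ r ∈ Finset.range (n + 1),
        (chebCardinal n r).eval (chebNode n s) * g (chebNode n r) =
          if s = r then g (chebNode n r) else 0 := fun r hr => by
      rw [eval_chebCardinal_chebNode hn (Nat.lt_succ_iff.mp (Finset.mem_range.mp hr))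
        (Nat.lt_succ_iff.mp (Finset.mem_range.mp hs))]
      split_ifs <;> simp
    rw [Finset.sum_congr rfl hcard, Finset.sum_ite_eq, if_pos hs]
  rw [← hP, hPQ, hQ]

theorem sum_comm_triple {α M : Type*} [AddCommMonoid M] (R : Finset α)
    (F : α → α → α → α → α → α → M) :
    ∑ r ∈ R, ∑ s ∈ R, ∑ t ∈ R, ∑ i ∈ R, ∑ j ∈ R, ∑ k ∈ R, F r s t i j k =
      ∑ i ∈ R, ∑ j ∈ R, ∑ k ∈ R, ∑ r ∈ R, ∑ s ∈ R, ∑ t ∈ R, F r s t i j k := by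
  have h := Finset.sum_comm (s := R ×ˢ R ×ˢ R) (t := R ×ˢ R ×ˢ R)
    (f := fun u v => F u.1 u.2.1 u.2.2 v.1 v.2.1 v.2.2)
  simpa only [Finset.sum_product] using h

theorem sum_mul_sum_mul_sum_mul {α S : Type*} [NonUnitalSemiring S] (R : Finset α)
    (u v w : α → S) (e : S) :
    (∑ i ∈ R, u i) * ((∑ j ∈ R, v j) * ((∑ k ∈ R, w k) * e)) =
      ∑ i ∈ R, ∑ j ∈ R, ∑ k ∈ R, u i * (v j * (w k * e)) := by
  rw [Finset.sum_mul]
  refine Finset.sum_congr rfl fun i _ => ?_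
  rw [Finset.sum_mul, Finset.mul_sum]
  refine Finset.sum_congr rfl fun j _ => ?_
  rw [Finset.sum_mul, Finset.mul_sum, Finset.mul_sum]

/-- Exactness of trivariate Chebyshev interpolation: a trivariate polynomial
`f` of degree at most `n` in each variable is reproduced exactly by its `n`-th
order trivariate Chebyshev expansion, whose coefficients `b_{i,j,k}` are
computed from the values of `f` on the tensor product Chebyshev grid. -/
theorem trivariate_chebyshev_interpolation_exact (n : ℕ) (hn : 1 ≤ n)
    (f : ℝ → ℝ → ℝ → ℝ) (c : ℕ → ℕ → ℕ → ℝ)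
    (hf : ∀ x y z : ℝ, f x y z =
      ∑ p ∈ Finset.range (n + 1), ∑ q ∈ Finset.range (n + 1),
        ∑ r ∈ Finset.range (n + 1), c p q r * x ^ p * y ^ q * z ^ r)
    (b : ℕ → ℕ → ℕ → ℝ)
    (hb : ∀ i j k : ℕ, b i j k = 8 / (n : ℝ) ^ 3 *
      ∑ r ∈ Finset.range (n + 1), ∑ s ∈ Finset.range (n + 1),
        ∑ t ∈ Finset.range (n + 1),
          chebWeight n r * chebWeight n s * chebWeight n t *
            ((Polynomial.Chebyshev.T ℝ (i : ℤ)).eval (chebNode n r) *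
              (Polynomial.Chebyshev.T ℝ (j : ℤ)).eval (chebNode n s) *
              (Polynomial.Chebyshev.T ℝ (k : ℤ)).eval (chebNode n t)) *
            f (chebNode n r) (chebNode n s) (chebNode n t)) :
    ∀ x y z : ℝ, f x y z =
      ∑ i ∈ Finset.range (n + 1), ∑ j ∈ Finset.range (n + 1),
        ∑ k ∈ Finset.range (n + 1),
          chebWeight n i * chebWeight n j * chebWeight n k * b i j k *
            ((Polynomial.Chebyshev.T ℝ (i : ℤ)).eval x *
              (Polynomial.Chebyshev.T ℝ (j : ℤ)).eval y *
              (Polynomial.Chebyshev.T ℝ (k : ℤ)).eval z) := by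
  intro x y z
  have hx : ∀ y z, f x y z = ∑ r ∈ Finset.range (n + 1),
      (chebCardinal n r).eval x * f (chebNode n r) y z := fun y z =>
    eq_sum_chebCardinal hn (fun x => f x y z)
      (fun p => ∑ q ∈ Finset.range (n + 1), ∑ r ∈ Finset.range (n + 1),
        c p q r * y ^ q * z ^ r)
      (fun x => by
        simp only [hf, Finset.sum_mul]
        exact Finset.sum_congr rfl fun p _ => Finset.sum_congr rfl fun q _ =>
          Finset.sum_congr rfl fun r _ => by ring) x
  have hy : ∀ x z, f x y z = ∑ s ∈ Finset.range (n + 1),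
      (chebCardinal n s).eval y * f x (chebNode n s) z := fun x z =>
    eq_sum_chebCardinal hn (fun y => f x y z)
      (fun q => ∑ p ∈ Finset.range (n + 1), ∑ r ∈ Finset.range (n + 1),
        c p q r * x ^ p * z ^ r)
      (fun y => by
        simp only [hf, Finset.sum_mul]
        rw [Finset.sum_comm]
        exact Finset.sum_congr rfl fun p _ => Finset.sum_congr rfl fun q _ =>
          Finset.sum_congr rfl fun r _ => by ring) y
  have hz : ∀ x y, f x y z = ∑ t ∈ Finset.range (n + 1),
      (chebCardinal n t).eval z * f x y (chebNode n t) := fun x y =>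
    eq_sum_chebCardinal hn (fun z => f x y z)
      (fun r => ∑ p ∈ Finset.range (n + 1), ∑ q ∈ Finset.range (n + 1),
        c p q r * x ^ p * y ^ q)
      (fun z => by
        simp only [hf, Finset.sum_mul]
        rw [Finset.sum_congr rfl fun p _ => Finset.sum_comm]
        exact Finset.sum_comm) z
  calc f x y z
      = ∑ r ∈ Finset.range (n + 1), ∑ s ∈ Finset.range (n + 1), ∑ t ∈ Finset.range (n + 1),
          (∑ i ∈ Finset.range (n + 1), 2 / (n : ℝ) * (chebWeight n i * chebWeight n r *
            (Polynomial.Chebyshev.T ℝ (i : ℤ)).eval (chebNode n r)) *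
            (Polynomial.Chebyshev.T ℝ (i : ℤ)).eval x) *
          ((∑ j ∈ Finset.range (n + 1), 2 / (n : ℝ) * (chebWeight n j * chebWeight n s *
            (Polynomial.Chebyshev.T ℝ (j : ℤ)).eval (chebNode n s)) *
            (Polynomial.Chebyshev.T ℝ (j : ℤ)).eval y) *
          ((∑ k ∈ Finset.range (n + 1), 2 / (n : ℝ) * (chebWeight n k * chebWeight n t *
            (Polynomial.Chebyshev.T ℝ (k : ℤ)).eval (chebNode n t)) *
            (Polynomial.Chebyshev.T ℝ (k : ℤ)).eval z) *
            f (chebNode n r) (chebNode n s) (chebNode n t))) := by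
        rw [hx]
        refine Finset.sum_congr rfl fun r _ => ?_
        rw [hy, Finset.mul_sum]
        refine Finset.sum_congr rfl fun s _ => ?_
        rw [hz, Finset.mul_sum, Finset.mul_sum]
        simp only [eval_chebCardinal]
    _ = _ := by
        simp only [sum_mul_sum_mul_sum_mul]
        rw [sum_comm_triple]
        refine Finset.sum_congr rfl fun i _ => Finset.sum_congr rfl fun j _ =>
          Finset.sum_congr rfl fun k _ => ?_
        simp only [hb, Finset.mul_sum, Finset.sum_mul]
        exact Finset.sum_congr rfl fun r _ => Finset.sum_congr rfl fun s _ =>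
          Finset.sum_congr rfl fun t _ => by ring
end

section
/- Let n and m be integers with 0 ≤ m ≤ n, and let P_n denote the Legendre polynomial of degree n given by Rodrigues' formula P_n(x) = (1/(2ⁿ·n!)) · dⁿ/dxⁿ [(x² − 1)ⁿ]. Let P_n^{(m)} denote the m-th derivative of P_n. Then the function y(t) = (sin t)^m · P_n^{(m)}(cos t) · √(sin t) satisfies the differential equation y''(t) + ((n + 1/2)² − (m² − 1/4)·csc²(t))·y(t) = 0 for all t ∈ (0, π). -/
open Polynomial in
/-- The `k`-th derivative of `(X ^ 2 - 1) ^ n` satisfies a second-order differential equation. -/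
theorem iterate_derivative_sq_sub_one_pow_ode {R : Type*} [CommRing R] (n k : ℕ) :
    (X ^ 2 - 1) * derivative^[k + 2] ((X ^ 2 - 1 : R[X]) ^ n)
      + 2 * ((k : R[X]) + 1 - (n : R[X])) * X * derivative^[k + 1] ((X ^ 2 - 1 : R[X]) ^ n)
      + ((k : R[X]) + 1) * ((k : R[X]) - 2 * (n : R[X])) * derivative^[k] ((X ^ 2 - 1 : R[X]) ^ n) = 0 := by
  induction k with
  | zero =>
    have h : (X ^ 2 - 1) * derivative ((X ^ 2 - 1 : R[X]) ^ n)
        = 2 * (n : R[X]) * X * (X ^ 2 - 1) ^ n := by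
      cases n with
      | zero => simp
      | succ n =>
        simp only [derivative_pow, derivative_sub, derivative_X, derivative_one,
          Nat.add_sub_cancel, map_natCast]
        push_cast
        ring
    have h' := congrArg derivative h
    simp only [derivative_mul, derivative_sub, derivative_X_pow, derivative_one, derivative_X,
      derivative_natCast, derivative_ofNat, map_natCast] at h'
    simp only [Function.iterate_succ_apply', Function.iterate_zero_apply]
    push_cast at h' ⊢
    linear_combination h'
  | succ k ih =>
    have h' := congrArg derivative ih
    simp only [derivative_mul, derivative_add, derivative_sub, derivative_X_pow, derivative_one,
      derivative_X, derivative_natCast, derivative_ofNat, map_natCast, derivative_zero,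
      ← Function.iterate_succ_apply' (derivative : R[X] → R[X])] at h'
    simp only [Nat.succ_eq_add_one] at h'
    rw [show k + 1 + 2 = k + 2 + 1 from rfl]
    push_cast at h' ⊢
    linear_combination h'

theorem Polynomial.iteratedDeriv_eval {𝕜 : Type*} [NontriviallyNormedField 𝕜]
    (p : Polynomial 𝕜) (k : ℕ) :
    iteratedDeriv k (fun x => p.eval x) = fun x => (Polynomial.derivative^[k] p).eval x := by
  induction k with
  | zero => simp
  | succ k ih =>
    rw [iteratedDeriv_succ, ih]
    funext x
    rw [Polynomial.deriv, Function.iterate_succ_apply']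

theorem hasDerivAt_sin_pow_mul_sqrt_sin (m : ℕ) {t : ℝ} (ht : 0 < Real.sin t) :
    HasDerivAt (fun t => Real.sin t ^ m * √(Real.sin t))
      ((m + 1 / 2) * (Real.cos t / Real.sin t) * (Real.sin t ^ m * √(Real.sin t))) t := by
  have h := ((Real.hasDerivAt_sin t).pow m).mul ((Real.hasDerivAt_sin t).sqrt ht.ne')
  refine h.congr_deriv ?_
  have hr : √(Real.sin t) ≠ 0 := (Real.sqrt_pos.2 ht).ne'
  have hs : √(Real.sin t) ^ 2 = Real.sin t := Real.sq_sqrt ht.le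
  have hs0 := ht.ne'
  generalize √(Real.sin t) = r at *
  simp only [Pi.pow_apply]
  cases m with
  | zero =>
    field_simp
    simp [← hs]
  | succ m =>
    rw [← hs]
    push_cast
    field_simp
    ring

/-- If the polynomial `p` satisfies the `m`-fold differentiated Legendre equation, then
`sin ^ m * p(cos) * √sin` satisfies the associated Legendre equation in normal form. -/
theorem deriv_deriv_sin_pow_mul_eval_cos_mul_sqrt_sin (p : Polynomial ℝ) (m : ℕ) (a : ℝ)
    (hp : ∀ x : ℝ, (x ^ 2 - 1) * p.derivative.derivative.eval x
      + 2 * (m + 1) * x * p.derivative.eval x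
      + ((m + 1 / 2) ^ 2 - a ^ 2) * p.eval x = 0)
    {t : ℝ} (ht : t ∈ Set.Ioo 0 Real.pi) :
    deriv (deriv fun t => Real.sin t ^ m * p.eval (Real.cos t) * √(Real.sin t)) t
      + (a ^ 2 - ((m : ℝ) ^ 2 - 1 / 4) * (1 / Real.sin t) ^ 2)
        * (Real.sin t ^ m * p.eval (Real.cos t) * √(Real.sin t)) = 0 := by
  have hcos (q : Polynomial ℝ) (t : ℝ) : HasDerivAt (fun t => q.eval (Real.cos t))
      (q.derivative.eval (Real.cos t) * -Real.sin t) t :=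
    (q.hasDerivAt (Real.cos t)).comp t (Real.hasDerivAt_cos t)
  have hfirst : deriv (fun t => Real.sin t ^ m * p.eval (Real.cos t) * √(Real.sin t))
      =ᶠ[nhds t] fun t => Real.sin t ^ m * √(Real.sin t) *
        ((m + 1 / 2) * (Real.cos t / Real.sin t) * p.eval (Real.cos t)
          - Real.sin t * p.derivative.eval (Real.cos t)) := by
    filter_upwards [isOpen_Ioo.mem_nhds ht] with u hu
    have h := (hasDerivAt_sin_pow_mul_sqrt_sin m (Real.sin_pos_of_mem_Ioo hu)).mul (hcos p u)
    convert h.deriv using 1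
    · congr 1
      funext v
      simp only [Pi.mul_apply]
      ring
    · ring
  have hs := Real.sin_pos_of_mem_Ioo ht
  have hs0 := hs.ne'
  have hsecond := (hasDerivAt_sin_pow_mul_sqrt_sin m hs).mul
    (((((Real.hasDerivAt_cos t).div (Real.hasDerivAt_sin t) hs0).const_mul ((m : ℝ) + 1 / 2)).mul
      (hcos p t)).sub ((Real.hasDerivAt_sin t).mul (hcos p.derivative t)))
  rw [hfirst.deriv_eq]
  refine (congrArg (· + _) hsecond.deriv).trans ?_
  have hode := hp (Real.cos t)
  have hsc := Real.sin_sq_add_cos_sq t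
  simp only [Pi.mul_apply, Pi.sub_apply, Pi.div_apply]
  generalize Real.sin t ^ m = z
  generalize √(Real.sin t) = r
  generalize Real.sin t = s at *
  generalize Real.cos t = c at *
  generalize Polynomial.eval c p = w₀ at *
  generalize Polynomial.eval c (Polynomial.derivative p) = w₁ at *
  generalize Polynomial.eval c (Polynomial.derivative (Polynomial.derivative p)) = w₂ at *
  linear_combination (norm := (field_simp; ring)) (-z * r) * hode
    + z * r * (w₂ + w₀ * (((m : ℝ) + 1 / 2) ^ 2 - (m + 1 / 2)) / s ^ 2) * hsc

/-- For integers `0 ≤ m ≤ n`, the function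
`y(t) = (sin t)^m · P_n^{(m)}(cos t) · √(sin t)`, where `P_n` is the Legendre
polynomial given by Rodrigues' formula and `P_n^{(m)}` is its `m`-th
derivative, satisfies the associated Legendre differential equation
`y'' + ((n + 1/2)² − (m² − 1/4)·csc²(t))·y = 0` on `(0, π)`. -/
theorem associated_legendre_ode (n m : ℕ) (hmn : m ≤ n) (P y : ℝ → ℝ)
    (hP : ∀ x : ℝ, P x = 1 / (2 ^ n * (n.factorial : ℝ)) *
      iteratedDeriv n (fun s : ℝ => (s ^ 2 - 1) ^ n) x)
    (hy : ∀ t : ℝ, y t =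
      (Real.sin t) ^ m * iteratedDeriv m P (Real.cos t) * Real.sqrt (Real.sin t)) :
    ∀ t ∈ Set.Ioo 0 Real.pi,
      deriv (deriv y) t +
        (((n : ℝ) + 1 / 2) ^ 2 -
          ((m : ℝ) ^ 2 - 1 / 4) * (1 / Real.sin t) ^ 2) * y t = 0 := by
  set u : Polynomial ℝ := (Polynomial.X ^ 2 - 1) ^ n with hu
  set p : Polynomial ℝ := Polynomial.C (1 / (2 ^ n * (n.factorial : ℝ))) *
    Polynomial.derivative^[n] u with hpdef
  have hPp : P = fun x => p.eval x := by
    funext x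
    rw [hP, show (fun s : ℝ => (s ^ 2 - 1) ^ n) = fun s => u.eval s by simp [hu],
      Polynomial.iteratedDeriv_eval]
    simp [hpdef]
  have hyp : y = fun t => Real.sin t ^ m * (Polynomial.derivative^[m] p).eval (Real.cos t)
      * √(Real.sin t) := by
    funext t
    rw [hy, hPp, Polynomial.iteratedDeriv_eval]
  have hder (k : ℕ) : Polynomial.derivative^[k] p =
      Polynomial.C (1 / (2 ^ n * (n.factorial : ℝ))) * Polynomial.derivative^[k + n] u := by
    rw [hpdef, Polynomial.iterate_derivative_C_mul, Function.iterate_add_apply]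
  intro t ht
  rw [hyp]
  refine deriv_deriv_sin_pow_mul_eval_cos_mul_sqrt_sin _ m _ (fun x => ?_) ht
  have hode := congrArg (Polynomial.eval x)
    (iterate_derivative_sq_sub_one_pow_ode (R := ℝ) n (m + n))
  rw [← Function.iterate_succ_apply' (Polynomial.derivative : Polynomial ℝ → _),
    ← Function.iterate_succ_apply' (Polynomial.derivative : Polynomial ℝ → _),
    hder, hder, hder, show m.succ.succ + n = m + n + 2 by lia,
    show m.succ + n = m + n + 1 by lia]
  simp only [← hu, Polynomial.eval_add, Polynomial.eval_mul, Polynomial.eval_sub,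
    Polynomial.eval_pow, Polynomial.eval_X, Polynomial.eval_one, Polynomial.eval_natCast,
    Polynomial.eval_ofNat, Polynomial.eval_zero, Polynomial.eval_C] at hode ⊢
  push_cast at hode
  linear_combination (1 / (2 ^ n * (n.factorial : ℝ))) * hode
end
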